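/- Let τ be a complex number with Im τ > 0, let q = e^{2πiτ}, and let y₁, y₂ be complex numbers. Then G_{1,3}(y₁/τ, y₂/τ, (−y₁−y₂)/τ | −1/τ) = −√3 · i · τ · e^{2i(y₁²+y₂²+y₁y₂)/(πτ)} · [ ∑_{r₁,r₂ ∈ ℤ} q^{r₁²+r₂²+r₁r₂} e^{2ir₁(2y₁+y₂)+2ir₂(y₁+2y₂)} + e^{2i(y₁+y₂)} ∑_{r₁,r₂ ∈ ℤ} q^{r₁²+r₂²+r₁r₂+r₁+r₂+1/3} e^{2ir₁(2y₁+y₂)+2ir₂(y₁+2y₂)} + e^{−2i(y₁+y₂)} ∑_{r₁,r₂ ∈ ℤ} q^{r₁²+r₂²+r₁r₂+r₁+r₂+1/3} e^{−2ir₁(2y₁+y₂)−2ir₂(y₁+2y₂)} ]. -/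

import Mathlib

open scoped BigOperators

/-- G_{m,n}(y₁,…,y_n|τ) = mn · ∑_{r₁+⋯+r_n=0} e^{2πiτ(r₁²+⋯+r_n²)/2} e^{2i(r₁y₁+⋯+r_ny_n)}. -/
noncomputable def G (m n : ℕ) (y : Fin n → ℂ) (τ : ℂ) : ℂ :=
  (m : ℂ) * (n : ℂ) * ∑' r : {r : Fin n → ℤ // ∑ j, r j = 0},
    Complex.exp (2 * Real.pi * Complex.I * τ * ((∑ j, ((r.1 j : ℂ)) ^ 2) / 2)) *
    Complex.exp (2 * Complex.I * ∑ j, (r.1 j : ℂ) * y j)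

/-!
Up to the factor `3`, `G 1 3` is the theta function of the hexagonal lattice `A₂`, whose Gram matrix
is `!![2, 1; 1, 2]`. Poisson summation in one lattice coordinate after the other, which amounts to
completing the square twice, turns the theta function of a positive definite binary quadratic form
at `-1 / τ` into that of the inverse form at `τ`; for `A₂` this is the theta function of the dual
lattice. Since `A₂` has index `3` in its dual, the dual theta function splits into the sums over
the three cosets of `A₂`, and these are the three series of the theorem.
-/

open Complex
open scoped Real

lemma jacobiTheta₂_eq_tsum_cexp_neg_sq_div {τ : ℂ} (hτ : τ ≠ 0) (z : ℂ) :
    jacobiTheta₂ z τ = 1 / (-I * τ) ^ (1 / 2 : ℂ) * ∑' n : ℤ, cexp (-π * I * (n - z) ^ 2 / τ) := by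
  rw [jacobiTheta₂_functional_equation, mul_assoc, jacobiTheta₂, ← tsum_mul_left]
  congr 1
  refine tsum_congr fun n ↦ ?_
  rw [jacobiTheta₂_term, ← Complex.exp_add]
  congr 1
  field_simp
  ring

lemma ne_zero_of_im_pos {τ : ℂ} (hτ : 0 < τ.im) : τ ≠ 0 := by
  rintro rfl
  exact lt_irrefl 0 hτ

lemma im_neg_one_div_pos {τ : ℂ} (hτ : 0 < τ.im) : 0 < (-1 / τ).im := by
  have hτ0 := ne_zero_of_im_pos hτ
  have := normSq_pos.mpr hτ0
  rw [neg_div, one_div, neg_im, inv_im, neg_div, neg_neg]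
  positivity

lemma summable_norm_jacobiTheta₂_term_mul {τ τ' : ℂ} (hτ : 0 < τ.im) (hτ' : 0 < τ'.im) (z w : ℂ) :
    Summable fun p : ℤ × ℤ ↦ ‖jacobiTheta₂_term p.1 z τ‖ * ‖jacobiTheta₂_term p.2 w τ'‖ :=
  ((summable_jacobiTheta₂_term_iff z τ).mpr hτ).norm.mul_of_nonneg
    ((summable_jacobiTheta₂_term_iff w τ').mpr hτ').norm
    (fun _ ↦ norm_nonneg _) (fun _ ↦ norm_nonneg _)

lemma ofReal_mul_cpow {a : ℝ} (ha : 0 ≤ a) (s r : ℂ) :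
    ((a : ℂ) * s) ^ r = (a : ℂ) ^ r * s ^ r := by
  rcases eq_or_ne r 0 with rfl | hr
  · simp
  rcases ha.eq_or_lt with rfl | ha
  · simp [hr]
  rcases eq_or_ne s 0 with rfl | hs
  · simp [hr]
  have ha' : (a : ℂ) ≠ 0 := ofReal_ne_zero.mpr ha.ne'
  rw [cpow_def_of_ne_zero (mul_ne_zero ha' hs), cpow_def_of_ne_zero ha', cpow_def_of_ne_zero hs,
    log_ofReal_mul ha hs, ofReal_log ha.le, add_mul, Complex.exp_add]

lemma ofReal_mul_cpow_half_mul_ofReal_mul_cpow_half {a b : ℝ} (ha : 0 ≤ a) (hb : 0 ≤ b) (s : ℂ) :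
    (a * s) ^ (1 / 2 : ℂ) * (b * s) ^ (1 / 2 : ℂ) = √(a * b) * s := by
  have hsq : s ^ (1 / 2 : ℂ) * s ^ (1 / 2 : ℂ) = s := by
    rw [← sq, one_div, cpow_ofNat_inv_pow]
  have hsqrt : (√(a * b) : ℂ) = (a : ℂ) ^ (1 / 2 : ℂ) * (b : ℂ) ^ (1 / 2 : ℂ) := by
    rw [← mul_cpow_ofReal_nonneg ha hb, ← ofReal_mul, Real.sqrt_eq_rpow,
      ofReal_cpow (mul_nonneg ha hb)]
    norm_num
  rw [ofReal_mul_cpow ha, ofReal_mul_cpow hb, mul_mul_mul_comm, hsq, hsqrt]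

section BinaryTheta

/-- The summand at `p ∈ ℤ²` of the theta series of the quadratic form `a x² + 2 b x y + c y²`. The
normalization is that of `jacobiTheta₂_term`: the period is `τ` and `z`, `w` are the elliptic
variables dual to the two coordinates. -/
noncomputable def binaryThetaTerm (a b c : ℝ) (p : ℤ × ℤ) (z w τ : ℂ) : ℂ :=
  cexp (π * I * (τ * (a * p.1 ^ 2 + 2 * b * p.1 * p.2 + c * p.2 ^ 2) + 2 * (p.1 * z + p.2 * w)))

/-- The theta function of the quadratic form with Gram matrix `!![a, b; b, c]`, the analogue of
`jacobiTheta₂` for two summation variables. -/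
noncomputable def binaryTheta (a b c : ℝ) (z w τ : ℂ) : ℂ :=
  ∑' p : ℤ × ℤ, binaryThetaTerm a b c p z w τ

variable {a b c : ℝ} {τ : ℂ}

-- By Cayley–Hamilton the Gram matrix `A` satisfies `tr A • A = A ^ 2 + det A`.
lemma det_div_trace_mul_le_binary_form (htr : 0 < a + c) (x y : ℝ) :
    (a * c - b ^ 2) / (a + c) * (x ^ 2 + y ^ 2) ≤ a * x ^ 2 + 2 * b * x * y + c * y ^ 2 := by
  rw [div_mul_eq_mul_div, div_le_iff₀ htr]
  nlinarith [sq_nonneg (a * x + b * y), sq_nonneg (b * x + c * y)]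

lemma pos_of_det_pos (ha : 0 < a) (hdet : 0 < a * c - b ^ 2) : 0 < c :=
  pos_of_mul_pos_right (by linarith [sq_nonneg b]) ha.le

lemma norm_binaryThetaTerm (p : ℤ × ℤ) (z w : ℂ) :
    ‖binaryThetaTerm a b c p z w τ‖ =
      Real.exp (-π * (a * p.1 ^ 2 + 2 * b * p.1 * p.2 + c * p.2 ^ 2) * τ.im
        - 2 * π * (p.1 * z.im + p.2 * w.im)) := by
  rw [binaryThetaTerm, Complex.norm_exp]
  congr 1
  simp only [← ofReal_intCast, pow_two, mul_re, ofReal_re, I_re, mul_zero, ofReal_im, I_im, mul_one,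
    sub_self, add_re, sub_zero, mul_im, zero_mul, add_zero, re_ofNat, im_ofNat, add_im, zero_add,
    zero_sub, neg_mul]
  ring

lemma norm_binaryThetaTerm_le (htr : 0 < a + c) (hτ : 0 ≤ τ.im) (p : ℤ × ℤ) (z w : ℂ) :
    ‖binaryThetaTerm a b c p z w τ‖ ≤
      ‖jacobiTheta₂_term p.1 z (((a * c - b ^ 2) / (a + c) : ℝ) * τ)‖ *
        ‖jacobiTheta₂_term p.2 w (((a * c - b ^ 2) / (a + c) : ℝ) * τ)‖ := by
  rw [norm_binaryThetaTerm, norm_jacobiTheta₂_term, norm_jacobiTheta₂_term, ← Real.exp_add,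
    Real.exp_le_exp, im_ofReal_mul]
  have hform := mul_le_mul_of_nonneg_left
    (det_div_trace_mul_le_binary_form (b := b) htr p.1 p.2) (mul_nonneg Real.pi_pos.le hτ)
  linarith

lemma summable_binaryThetaTerm (ha : 0 < a) (hdet : 0 < a * c - b ^ 2) (hτ : 0 < τ.im) (z w : ℂ) :
    Summable fun p ↦ binaryThetaTerm a b c p z w τ := by
  have hc := pos_of_det_pos ha hdet
  have him : 0 < ((((a * c - b ^ 2) / (a + c) : ℝ) : ℂ) * τ).im := by
    rw [im_ofReal_mul]
    positivity
  exact (summable_norm_jacobiTheta₂_term_mul him him z w).of_norm_bounded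
    fun p ↦ norm_binaryThetaTerm_le (add_pos ha hc) hτ.le p z w

lemma binaryTheta_eq_tsum_mul_jacobiTheta₂ (ha : 0 < a) (hdet : 0 < a * c - b ^ 2)
    (hτ : 0 < τ.im) (z w : ℂ) :
    binaryTheta a b c z w τ =
      ∑' n : ℤ, jacobiTheta₂_term n w (c * τ) * jacobiTheta₂ (z + n * b * τ) (a * τ) := by
  have hsum := summable_binaryThetaTerm ha hdet hτ z w
  rw [binaryTheta, hsum.tsum_prod,
    ← Summable.tsum_comm (f := fun m n ↦ binaryThetaTerm a b c (m, n) z w τ) hsum]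
  refine tsum_congr fun n ↦ ?_
  rw [jacobiTheta₂, ← tsum_mul_left]
  refine tsum_congr fun m ↦ ?_
  rw [binaryThetaTerm, jacobiTheta₂_term, jacobiTheta₂_term, ← Complex.exp_add]
  congr 1
  ring

lemma summable_jacobiTheta₂_term_mul_cexp_neg_sq_div (ha : 0 < a) (hdet : 0 < a * c - b ^ 2)
    (hτ : 0 < τ.im) (z w : ℂ) :
    Summable (Function.uncurry fun n k : ℤ ↦
      jacobiTheta₂_term n (w + b * (k - z) / a) ((a * c - b ^ 2) / a * τ) *
        cexp (-π * I * (k - z) ^ 2 / (a * τ))) := by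
  have ha' : (a : ℂ) ≠ 0 := ofReal_ne_zero.mpr ha.ne'
  have hτ0 := ne_zero_of_im_pos hτ
  have him₁ : 0 < (((a * c - b ^ 2) / a : ℂ) * τ).im := by
    rw [show ((a * c - b ^ 2) / a : ℂ) = ((a * c - b ^ 2) / a : ℝ) by push_cast; rfl, im_ofReal_mul]
    positivity
  have him₂ : 0 < (-1 / (a * τ)).im := im_neg_one_div_pos (by rw [im_ofReal_mul]; positivity)
  refine Summable.of_norm (((summable_norm_jacobiTheta₂_term_mul him₁ him₂ (w - b * z / a)
    (z / (a * τ))).mul_right ‖cexp (-π * I * z ^ 2 / (a * τ))‖).congr fun ⟨n, k⟩ ↦ ?_)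
  -- the two series are coupled only through a phase of modulus one
  have hphase : ‖cexp ((2 * π * b / a * n * k : ℝ) * I)‖ = 1 := norm_exp_ofReal_mul_I _
  rw [Function.uncurry_apply_pair, ← mul_one (_ * _ * _), ← hphase]
  simp only [← norm_mul, jacobiTheta₂_term, ← Complex.exp_add]
  congr 2
  push_cast
  field_simp
  ring

lemma jacobiTheta₂_term_mul_jacobiTheta₂_eq_tsum (ha : a ≠ 0) (hτ : τ ≠ 0) (n : ℤ) (z w : ℂ) :
    jacobiTheta₂_term n w (c * τ) * jacobiTheta₂ (z + n * b * τ) (a * τ) =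
      1 / (a * (-I * τ)) ^ (1 / 2 : ℂ) * ∑' k : ℤ,
        jacobiTheta₂_term n (w + b * (k - z) / a) ((a * c - b ^ 2) / a * τ) *
          cexp (-π * I * (k - z) ^ 2 / (a * τ)) := by
  have ha' : (a : ℂ) ≠ 0 := ofReal_ne_zero.mpr ha
  rw [jacobiTheta₂_eq_tsum_cexp_neg_sq_div (mul_ne_zero ha' hτ), mul_left_comm, ← tsum_mul_left,
    mul_left_comm (-I)]
  congr 1
  refine tsum_congr fun k ↦ ?_
  simp only [jacobiTheta₂_term, ← Complex.exp_add]
  congr 1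
  field_simp
  ring

-- Completing the square a second time is what produces the inverse Gram matrix.
lemma jacobiTheta₂_mul_cexp_neg_sq_div_eq_tsum (ha : a ≠ 0) (hdet : a * c - b ^ 2 ≠ 0) (hτ : τ ≠ 0)
    (k : ℤ) (z w : ℂ) :
    jacobiTheta₂ (w + b * (k - z) / a) ((a * c - b ^ 2) / a * τ) *
        cexp (-π * I * (k - z) ^ 2 / (a * τ)) =
      1 / (((a * c - b ^ 2) / a : ℝ) * (-I * τ)) ^ (1 / 2 : ℂ) *
        (cexp (-π * I * (c * z ^ 2 - 2 * b * z * w + a * w ^ 2) / ((a * c - b ^ 2) * τ)) *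
          ∑' l : ℤ, binaryThetaTerm (c / (a * c - b ^ 2)) (-b / (a * c - b ^ 2))
            (a / (a * c - b ^ 2)) (k, l) ((c * z - b * w) / ((a * c - b ^ 2) * τ))
            ((a * w - b * z) / ((a * c - b ^ 2) * τ)) (-1 / τ)) := by
  have ha' : (a : ℂ) ≠ 0 := ofReal_ne_zero.mpr ha
  have hdet' : (a * c - b ^ 2 : ℂ) ≠ 0 := mod_cast hdet
  rw [jacobiTheta₂_eq_tsum_cexp_neg_sq_div (mul_ne_zero (div_ne_zero hdet' ha') hτ), mul_assoc,
    ← tsum_mul_right, mul_left_comm (-I)]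
  push_cast
  congr 1
  rw [← tsum_mul_left]
  refine tsum_congr fun l ↦ ?_
  simp only [binaryThetaTerm, ← Complex.exp_add]
  congr 1
  push_cast
  field_simp
  ring

lemma summable_binaryThetaTerm_inverse (ha : 0 < a) (hdet : 0 < a * c - b ^ 2) (hτ : 0 < τ.im)
    (z w : ℂ) :
    Summable fun p ↦ binaryThetaTerm (c / (a * c - b ^ 2)) (-b / (a * c - b ^ 2))
      (a / (a * c - b ^ 2)) p z w τ := by
  refine summable_binaryThetaTerm (div_pos (pos_of_det_pos ha hdet) hdet) ?_ hτ z w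
  have hdet_inv : c / (a * c - b ^ 2) * (a / (a * c - b ^ 2)) - (-b / (a * c - b ^ 2)) ^ 2 =
      1 / (a * c - b ^ 2) := by
    field_simp
  rw [hdet_inv]
  positivity

theorem binaryTheta_functional_equation (ha : 0 < a) (hdet : 0 < a * c - b ^ 2) (hτ : 0 < τ.im)
    (z w : ℂ) :
    binaryTheta a b c z w τ =
      1 / (√(a * c - b ^ 2) * (-I * τ)) *
        cexp (-π * I * (c * z ^ 2 - 2 * b * z * w + a * w ^ 2) / ((a * c - b ^ 2) * τ)) *
        binaryTheta (c / (a * c - b ^ 2)) (-b / (a * c - b ^ 2)) (a / (a * c - b ^ 2))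
          ((c * z - b * w) / ((a * c - b ^ 2) * τ)) ((a * w - b * z) / ((a * c - b ^ 2) * τ))
          (-1 / τ) := by
  have hτ0 := ne_zero_of_im_pos hτ
  have hdual := summable_binaryThetaTerm_inverse ha hdet (im_neg_one_div_pos hτ)
    ((c * z - b * w) / ((a * c - b ^ 2) * τ)) ((a * w - b * z) / ((a * c - b ^ 2) * τ))
  calc
    binaryTheta a b c z w τ
      = ∑' n : ℤ, jacobiTheta₂_term n w (c * τ) * jacobiTheta₂ (z + n * b * τ) (a * τ) :=
        binaryTheta_eq_tsum_mul_jacobiTheta₂ ha hdet hτ z w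
    _ = 1 / (a * (-I * τ)) ^ (1 / 2 : ℂ) * ∑' (n : ℤ) (k : ℤ),
          jacobiTheta₂_term n (w + b * (k - z) / a) ((a * c - b ^ 2) / a * τ) *
            cexp (-π * I * (k - z) ^ 2 / (a * τ)) := by
        simp only [jacobiTheta₂_term_mul_jacobiTheta₂_eq_tsum ha.ne' hτ0, tsum_mul_left]
    _ = 1 / (a * (-I * τ)) ^ (1 / 2 : ℂ) * ∑' k : ℤ,
          jacobiTheta₂ (w + b * (k - z) / a) ((a * c - b ^ 2) / a * τ) *
            cexp (-π * I * (k - z) ^ 2 / (a * τ)) := by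
        rw [← (summable_jacobiTheta₂_term_mul_cexp_neg_sq_div ha hdet hτ z w).tsum_comm]
        simp only [jacobiTheta₂, tsum_mul_right]
    _ = _ := by
        simp only [jacobiTheta₂_mul_cexp_neg_sq_div_eq_tsum ha.ne' hdet.ne' hτ0, tsum_mul_left]
        rw [← hdual.tsum_prod, ← binaryTheta, ← mul_assoc, ← mul_assoc, one_div_mul_one_div,
          ofReal_mul_cpow_half_mul_ofReal_mul_cpow_half ha.le (div_pos hdet ha).le,
          mul_div_cancel₀ _ ha.ne']

end BinaryTheta

/-- The cosets of `A₂` in its dual, in the coordinates of the basis dual to one with Gram matrix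
`!![2, 1; 1, 2]`: the index `0` labels `A₂` itself, spanned by `(2, 1)` and `(1, 2)`, and the
indices `1` and `2` its two other cosets. The last one is parametrized as the negative of the
second. -/
def hexagonalDualCoset (i : Fin 3) (r : ℤ × ℤ) : ℤ × ℤ :=
  ![(2 * r.1 + r.2, r.1 + 2 * r.2), (2 * r.1 + r.2 + 1, r.1 + 2 * r.2 + 1),
    (-(2 * r.1 + r.2 + 1), -(r.1 + 2 * r.2 + 1))] i

lemma bijective_uncurry_hexagonalDualCoset :
    Function.Bijective (Function.uncurry hexagonalDualCoset) := by
  constructor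
  · rintro ⟨i, a, b⟩ ⟨j, c, d⟩ h
    have hmod_three := congrArg (fun p : ℤ × ℤ ↦ (p.1 + p.2) % 3) h
    fin_cases i <;> fin_cases j <;>
      simp only [Function.uncurry, hexagonalDualCoset, Fin.zero_eta, Fin.mk_one, Fin.reduceFinMk,
        Matrix.cons_val, Prod.mk.injEq, true_and] at h hmod_three ⊢ <;> omega
  · rintro ⟨m, n⟩
    have hmod : (m + n) % 3 = 0 ∨ (m + n) % 3 = 1 ∨ (m + n) % 3 = 2 := by omega
    rcases hmod with h | h | h
    · refine ⟨(0, m - (m + n) / 3, n - (m + n) / 3), Prod.ext ?_ ?_⟩ <;>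
        simp only [Function.uncurry, hexagonalDualCoset, Matrix.cons_val] <;> omega
    · refine ⟨(2, (m + n) / 3 - m, (m + n) / 3 - n), Prod.ext ?_ ?_⟩ <;>
        simp only [Function.uncurry, hexagonalDualCoset, Matrix.cons_val] <;> omega
    · refine ⟨(1, m - 1 - (m + n) / 3, n - 1 - (m + n) / 3), Prod.ext ?_ ?_⟩ <;>
        simp only [Function.uncurry, hexagonalDualCoset, Matrix.cons_val] <;> omega

lemma tsum_eq_sum_tsum_hexagonalDualCoset {E : Type*} [AddCommGroup E] [UniformSpace E]
    [IsUniformAddGroup E] [CompleteSpace E] [T2Space E] {f : ℤ × ℤ → E} (hf : Summable f) :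
    ∑' p, f p = ∑ i, ∑' r, f (hexagonalDualCoset i r) := by
  let e := Equiv.ofBijective _ bijective_uncurry_hexagonalDualCoset
  rw [← e.tsum_eq f, Summable.tsum_prod (f := fun x ↦ f (e x)) (e.summable_iff.mpr hf),
    tsum_fintype]
  rfl

/-- The integer triples of sum zero, which form the root lattice of `A₂`, in the coordinates given
by their first two entries. -/
def intPairEquivSumZero : ℤ × ℤ ≃ {r : Fin 3 → ℤ // ∑ j, r j = 0} where
  toFun p := ⟨![p.1, p.2, -p.1 - p.2], by simp [Fin.sum_univ_three]⟩
  invFun r := (r.1 0, r.1 1)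
  left_inv _ := rfl
  right_inv := by
    rintro ⟨r, hr⟩
    rw [Fin.sum_univ_three] at hr
    ext j
    fin_cases j
    · rfl
    · rfl
    · change -r 0 - r 1 = r 2
      omega

lemma coe_intPairEquivSumZero (p : ℤ × ℤ) :
    (intPairEquivSumZero p : Fin 3 → ℤ) = ![p.1, p.2, -p.1 - p.2] := rfl

theorem G_three_eq_binaryTheta (m : ℕ) (y : Fin 3 → ℂ) (τ : ℂ) :
    G m 3 y τ = m * 3 * binaryTheta 2 1 2 ((y 0 - y 2) / π) ((y 1 - y 2) / π) τ := by
  have hπ : (π : ℂ) ≠ 0 := ofReal_ne_zero.mpr Real.pi_ne_zero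
  rw [G, binaryTheta, ← intPairEquivSumZero.tsum_eq]
  push_cast
  congr 1
  refine tsum_congr fun p ↦ ?_
  rw [binaryThetaTerm, ← Complex.exp_add]
  congr 1
  simp only [coe_intPairEquivSumZero, Fin.sum_univ_three, Matrix.cons_val]
  push_cast
  field_simp
  ring

lemma binaryTheta_two_thirds_functional_equation {τ : ℂ} (hτ : 0 < τ.im) (u v : ℂ) :
    binaryTheta (2 / 3) (-1 / 3) (2 / 3) u v τ =
      √3 / (-I * τ) * cexp (-(2 * π * I * (u ^ 2 + u * v + v ^ 2) / τ)) *
        binaryTheta 2 1 2 ((2 * u + v) / τ) ((u + 2 * v) / τ) (-1 / τ) := by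
  have hτ0 := ne_zero_of_im_pos hτ
  have hdet : (2 / 3 * (2 / 3) - (-1 / 3) ^ 2 : ℝ) = 3⁻¹ := by norm_num
  have hprefactor : 1 / ((√3⁻¹ : ℝ) * (-I * τ)) = √3 / (-I * τ) := by
    rw [Real.sqrt_inv, ofReal_inv]
    field_simp
  rw [binaryTheta_functional_equation (by norm_num) (by norm_num) hτ, hdet, hprefactor]
  congr 1
  · congr 2
    push_cast
    field_simp
    ring
  · congr 1 <;> push_cast <;> field_simp <;> ring

theorem binaryTheta_two_one_two_neg_one_div {τ : ℂ} (hτ : 0 < τ.im) (u v : ℂ) :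
    binaryTheta 2 1 2 ((2 * u + v) / τ) ((u + 2 * v) / τ) (-1 / τ) =
      -I * τ / √3 * cexp (2 * π * I * (u ^ 2 + u * v + v ^ 2) / τ) *
        binaryTheta (2 / 3) (-1 / 3) (2 / 3) u v τ := by
  have hτ0 := ne_zero_of_im_pos hτ
  have hsqrt : (√3 : ℂ) ≠ 0 := ofReal_ne_zero.mpr (by positivity)
  rw [binaryTheta_two_thirds_functional_equation hτ, Complex.exp_neg]
  field_simp [Complex.exp_ne_zero]

theorem binaryTheta_two_thirds_eq_add_add {τ : ℂ} (hτ : 0 < τ.im) (u v : ℂ) :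
    binaryTheta (2 / 3) (-1 / 3) (2 / 3) u v τ =
      binaryTheta 2 1 2 (2 * u + v) (u + 2 * v) τ +
      cexp (2 * π * I * (τ / 3 + u + v)) *
        binaryTheta 2 1 2 (τ + (2 * u + v)) (τ + (u + 2 * v)) τ +
      cexp (2 * π * I * (τ / 3 - u - v)) *
        binaryTheta 2 1 2 (τ - (2 * u + v)) (τ - (u + 2 * v)) τ := by
  rw [binaryTheta, tsum_eq_sum_tsum_hexagonalDualCoset
    (summable_binaryThetaTerm (by norm_num) (by norm_num) hτ u v), Fin.sum_univ_three]
  simp only [binaryTheta, binaryThetaTerm, hexagonalDualCoset, Matrix.cons_val, ← tsum_mul_left,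
    ← Complex.exp_add]
  refine congrArg₂ (· + ·) (congrArg₂ (· + ·) ?_ ?_) ?_
  all_goals
    refine tsum_congr fun r ↦ congrArg cexp ?_
    push_cast
    ring

theorem G_three_neg_one_div {τ : ℂ} (hτ : 0 < τ.im) (m : ℕ) (y₁ y₂ : ℂ) :
    G m 3 ![y₁ / τ, y₂ / τ, (-y₁ - y₂) / τ] (-1 / τ) =
      m * (-√3 * I * τ * cexp (2 * I * (y₁ ^ 2 + y₂ ^ 2 + y₁ * y₂) / (π * τ)) *
        binaryTheta (2 / 3) (-1 / 3) (2 / 3) (y₁ / π) (y₂ / π) τ) := by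
  have hπ : (π : ℂ) ≠ 0 := ofReal_ne_zero.mpr Real.pi_ne_zero
  have hτ0 := ne_zero_of_im_pos hτ
  have hcoeff : 3 * (-I * τ / √3) = -√3 * I * τ := by
    have hsqrt : (√3 : ℂ) ≠ 0 := ofReal_ne_zero.mpr (by positivity)
    have hsq : (√3 : ℂ) ^ 2 = 3 := by
      rw [← ofReal_pow, Real.sq_sqrt (by norm_num)]
      norm_num
    rw [← hsq]
    field_simp
  have hz : (y₁ / τ - (-y₁ - y₂) / τ) / π = (2 * (y₁ / π) + y₂ / π) / τ := by ring
  have hw : (y₂ / τ - (-y₁ - y₂) / τ) / π = (y₁ / π + 2 * (y₂ / π)) / τ := by ring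
  have hexp : 2 * π * I * ((y₁ / π) ^ 2 + y₁ / π * (y₂ / π) + (y₂ / π) ^ 2) / τ =
      2 * I * (y₁ ^ 2 + y₂ ^ 2 + y₁ * y₂) / (π * τ) := by
    field_simp
    ring
  simp only [G_three_eq_binaryTheta, Matrix.cons_val]
  rw [hz, hw, binaryTheta_two_one_two_neg_one_div hτ, hexp, mul_assoc (m : ℂ), ← mul_assoc 3,
    ← mul_assoc 3, hcoeff]

theorem G13_imaginary_transformation (τ : ℂ) (hτ : 0 < τ.im) (y₁ y₂ : ℂ) :
    G 1 3 ![y₁ / τ, y₂ / τ, (-y₁ - y₂) / τ] (-1 / τ)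
    = -(Real.sqrt 3 : ℂ) * Complex.I * τ *
        Complex.exp (2 * Complex.I * (y₁ ^ 2 + y₂ ^ 2 + y₁ * y₂) / (Real.pi * τ)) *
        ((∑' r : ℤ × ℤ,
            Complex.exp (2 * Real.pi * Complex.I * τ *
                ((r.1 : ℂ) ^ 2 + (r.2 : ℂ) ^ 2 + (r.1 : ℂ) * (r.2 : ℂ))) *
              Complex.exp (2 * Complex.I * (r.1 : ℂ) * (2 * y₁ + y₂) +
                2 * Complex.I * (r.2 : ℂ) * (y₁ + 2 * y₂)))
          + Complex.exp (2 * Complex.I * (y₁ + y₂)) *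
            ∑' r : ℤ × ℤ,
              Complex.exp (2 * Real.pi * Complex.I * τ *
                  ((r.1 : ℂ) ^ 2 + (r.2 : ℂ) ^ 2 + (r.1 : ℂ) * (r.2 : ℂ) +
                    (r.1 : ℂ) + (r.2 : ℂ) + 1 / 3)) *
                Complex.exp (2 * Complex.I * (r.1 : ℂ) * (2 * y₁ + y₂) +
                  2 * Complex.I * (r.2 : ℂ) * (y₁ + 2 * y₂))
          + Complex.exp (-2 * Complex.I * (y₁ + y₂)) *
            ∑' r : ℤ × ℤ,
              Complex.exp (2 * Real.pi * Complex.I * τ *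
                  ((r.1 : ℂ) ^ 2 + (r.2 : ℂ) ^ 2 + (r.1 : ℂ) * (r.2 : ℂ) +
                    (r.1 : ℂ) + (r.2 : ℂ) + 1 / 3)) *
                Complex.exp (-2 * Complex.I * (r.1 : ℂ) * (2 * y₁ + y₂) -
                  2 * Complex.I * (r.2 : ℂ) * (y₁ + 2 * y₂))) := by
  have hπ : (π : ℂ) ≠ 0 := ofReal_ne_zero.mpr Real.pi_ne_zero
  rw [G_three_neg_one_div hτ, Nat.cast_one, one_mul, binaryTheta_two_thirds_eq_add_add hτ]
  congr 1
  simp only [binaryTheta, binaryThetaTerm, ← tsum_mul_left, ← Complex.exp_add]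
  refine congrArg₂ (· + ·) (congrArg₂ (· + ·) ?_ ?_) ?_
  all_goals
    refine tsum_congr fun r ↦ congrArg cexp ?_
    push_cast
    field_simp
    ring
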